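/- If α₁, α₂, α₃ are not vertices of an equilateral triangle, then the set of pairs (z₁, z₂) ∈ ℂ² satisfying the system P₁(z₁,z₂) = 0 and P₂(z₁,z₂) = 0 is exactly {(u*, v*), (v*, u*)}. -/

import Mathlib

/-!
The polar form of the cubic `X³ + aX² + bX + c` with roots `α₁, α₂, α₃`, evaluated at `z₁, z₂, w`,
is `w * P₁ z₁ z₂ + P₂ z₁ z₂`. The equations `P₁ = P₂ = 0` are linear in `z₁ + z₂` and `z₁ * z₂`
with determinant proportional to `a² - 3b`, and Cramer's rule makes `z₁, z₂` the two roots of the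
Hessian `(a² - 3b)X² + (ab - 9c)X + (b² - 3ac)`. The Lagrange resolvents attached to the two
primitive sixth roots of unity factor the quadratic form `(x₁ + x₂ + x₃)² - 3(x₁x₂ + x₁x₃ + x₂x₃)`.
Its values at the `αᵢ` and at their pairwise products are `a² - 3b` and `b² - 3ac`, and its polar
form at these two triples is `ab - 9c`, so quotients of resolvents are the roots of the Hessian.
-/

theorem add_eq_add_and_mul_eq_mul_iff {R : Type*} [CommRing R] [NoZeroDivisors R] {x y u v : R} :
    x + y = u + v ∧ x * y = u * v ↔ x = u ∧ y = v ∨ x = v ∧ y = u := by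
  constructor
  · rintro ⟨hadd, hmul⟩
    have hroot : (x - u) * (x - v) = 0 := by linear_combination x * hadd - hmul
    rcases mul_eq_zero.mp hroot with h | h
    · exact .inl ⟨sub_eq_zero.mp h, by linear_combination hadd - h⟩
    · exact .inr ⟨sub_eq_zero.mp h, by linear_combination hadd - h⟩
  · rintro (⟨rfl, rfl⟩ | ⟨rfl, rfl⟩)
    · exact ⟨rfl, rfl⟩
    · exact ⟨add_comm .., mul_comm ..⟩

section Resolvent

variable {R : Type*} [CommRing R] {e₁ e₂ : R}

/-- The Lagrange resolvent of `x₁, x₂, x₃`, up to the sign that turns the primitive cube roots of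
unity into their negatives `e₁, e₂`. Exchanging `e₁` and `e₂` gives the conjugate resolvent. -/
def lagrangeResolvent (e₁ e₂ x₁ x₂ x₃ : R) : R :=
  x₁ * e₁ + x₂ * e₂ - x₃

theorem lagrangeResolvent_mul_swap (hadd : e₁ + e₂ = 1) (hmul : e₁ * e₂ = 1) (x₁ x₂ x₃ : R) :
    lagrangeResolvent e₁ e₂ x₁ x₂ x₃ * lagrangeResolvent e₂ e₁ x₁ x₂ x₃ =
      (x₁ + x₂ + x₃) ^ 2 - 3 * (x₁ * x₂ + x₁ * x₃ + x₂ * x₃) := by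
  have hsq : e₁ ^ 2 + e₂ ^ 2 = -1 := by linear_combination (e₁ + e₂ + 1) * hadd - 2 * hmul
  unfold lagrangeResolvent
  linear_combination (x₁ ^ 2 + x₂ ^ 2) * hmul + x₁ * x₂ * hsq - (x₁ + x₂) * x₃ * hadd

theorem lagrangeResolvent_mul_swap_add_mul_swap (hadd : e₁ + e₂ = 1) (hmul : e₁ * e₂ = 1)
    (x₁ x₂ x₃ y₁ y₂ y₃ : R) :
    lagrangeResolvent e₁ e₂ x₁ x₂ x₃ * lagrangeResolvent e₂ e₁ y₁ y₂ y₃ +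
        lagrangeResolvent e₁ e₂ y₁ y₂ y₃ * lagrangeResolvent e₂ e₁ x₁ x₂ x₃ =
      3 * (x₁ * y₁ + x₂ * y₂ + x₃ * y₃) - (x₁ + x₂ + x₃) * (y₁ + y₂ + y₃) := by
  have hsq : e₁ ^ 2 + e₂ ^ 2 = -1 := by linear_combination (e₁ + e₂ + 1) * hadd - 2 * hmul
  unfold lagrangeResolvent
  linear_combination 2 * (x₁ * y₁ + x₂ * y₂) * hmul + (x₁ * y₂ + x₂ * y₁) * hsq -
    ((x₁ + x₂) * y₃ + (y₁ + y₂) * x₃) * hadd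

end Resolvent

section Hessian

variable {K : Type*} [Field K] {a b c e₁ e₂ α₁ α₂ α₃ : K}

theorem polar_system_iff (h3 : (3 : K) ≠ 0) (hdet : a ^ 2 - 3 * b ≠ 0) {s p : K} :
    p + a / 3 * s + b / 3 = 0 ∧ a / 3 * p + b / 3 * s + c = 0 ↔
      s = (9 * c - a * b) / (a ^ 2 - 3 * b) ∧ p = (b ^ 2 - 3 * a * c) / (a ^ 2 - 3 * b) := by
  rw [eq_div_iff hdet, eq_div_iff hdet]
  constructor
  · rintro ⟨h₁, h₂⟩
    field_simp at h₁ h₂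
    exact ⟨by linear_combination a * h₁ - 3 * h₂, by linear_combination a * h₂ - b * h₁⟩
  · rintro ⟨hs, hp⟩
    constructor <;> field_simp <;> apply mul_left_cancel₀ hdet
    · linear_combination 3 * hp + a * hs
    · linear_combination a * hp + b * hs

/-- For `e₁ + e₂ = e₁ * e₂ = 1`, a root of the Hessian of the cubic with roots `α₁, α₂, α₃`; the
other one is obtained by exchanging `e₁` and `e₂`. It is meaningful only where the resolvent in
the denominator is nonzero. -/
def hessianRoot (e₁ e₂ α₁ α₂ α₃ : K) : K :=
  -(lagrangeResolvent e₁ e₂ (α₂ * α₃) (α₁ * α₃) (α₁ * α₂) / lagrangeResolvent e₁ e₂ α₁ α₂ α₃)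

theorem hessianRoot_add_swap (hadd : e₁ + e₂ = 1) (hmul : e₁ * e₂ = 1)
    (hne₁ : lagrangeResolvent e₁ e₂ α₁ α₂ α₃ ≠ 0) (hne₂ : lagrangeResolvent e₂ e₁ α₁ α₂ α₃ ≠ 0) :
    hessianRoot e₁ e₂ α₁ α₂ α₃ + hessianRoot e₂ e₁ α₁ α₂ α₃ =
      ((α₁ + α₂ + α₃) * (α₁ * α₂ + α₁ * α₃ + α₂ * α₃) - 9 * (α₁ * α₂ * α₃)) /
        ((α₁ + α₂ + α₃) ^ 2 - 3 * (α₁ * α₂ + α₁ * α₃ + α₂ * α₃)) := by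
  rw [hessianRoot, hessianRoot, ← neg_add, div_add_div _ _ hne₁ hne₂,
    lagrangeResolvent_mul_swap_add_mul_swap hadd hmul, lagrangeResolvent_mul_swap hadd hmul,
    ← neg_div]
  ring

theorem hessianRoot_mul_swap (hadd : e₁ + e₂ = 1) (hmul : e₁ * e₂ = 1) (α₁ α₂ α₃ : K) :
    hessianRoot e₁ e₂ α₁ α₂ α₃ * hessianRoot e₂ e₁ α₁ α₂ α₃ =
      ((α₁ * α₂ + α₁ * α₃ + α₂ * α₃) ^ 2 - 3 * (α₁ + α₂ + α₃) * (α₁ * α₂ * α₃)) /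
        ((α₁ + α₂ + α₃) ^ 2 - 3 * (α₁ * α₂ + α₁ * α₃ + α₂ * α₃)) := by
  rw [hessianRoot, hessianRoot, neg_mul_neg, div_mul_div_comm,
    lagrangeResolvent_mul_swap hadd hmul, lagrangeResolvent_mul_swap hadd hmul]
  ring

end Hessian

theorem exp_neg_pi_div_three_add_exp_pi_div_three :
    Complex.exp (-(Real.pi : ℂ) / 3 * Complex.I) + Complex.exp ((Real.pi : ℂ) / 3 * Complex.I) =
      1 := by
  have hcos : Complex.cos ((Real.pi : ℂ) / 3) = 1 / 2 := by
    rw [← Complex.ofReal_ofNat, ← Complex.ofReal_div, ← Complex.ofReal_cos, Real.cos_pi_div_three]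
    norm_num
  rw [neg_div, add_comm, ← Complex.two_cos, hcos, mul_one_div_cancel two_ne_zero]

theorem exp_neg_pi_div_three_mul_exp_pi_div_three :
    Complex.exp (-(Real.pi : ℂ) / 3 * Complex.I) * Complex.exp ((Real.pi : ℂ) / 3 * Complex.I) =
      1 := by
  rw [neg_div, neg_mul, Complex.exp_neg, inv_mul_cancel₀ (Complex.exp_ne_zero _)]

theorem stmt_9_general {K : Type*} [Field K] (h3 : (3 : K) ≠ 0)
    {α₁ α₂ α₃ e₁ e₂ e₃ a b c u v : K} {P₁ P₂ : K → K → K}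
    (hadd : e₁ + e₂ = 1) (hmul : e₁ * e₂ = 1) (he₃ : e₃ = -1)
    (ha : a = -(α₁ + α₂ + α₃))
    (hb : b = α₁ * α₂ + α₁ * α₃ + α₂ * α₃)
    (hc : c = -(α₁ * α₂ * α₃))
    (hP₁ : ∀ z₁ z₂, P₁ z₁ z₂ = z₁ * z₂ + a / 3 * (z₁ + z₂) + b / 3)
    (hP₂ : ∀ z₁ z₂, P₂ z₁ z₂ = a / 3 * (z₁ * z₂) + b / 3 * (z₁ + z₂) + c)
    (hu : u = -((α₁ * α₂ * e₃ + α₁ * α₃ * e₂ + α₂ * α₃ * e₁) /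
      (α₁ * e₁ + α₂ * e₂ + α₃ * e₃)))
    (hv : v = -((α₁ * α₂ * e₃ + α₁ * α₃ * e₁ + α₂ * α₃ * e₂) /
      (α₁ * e₂ + α₂ * e₁ + α₃ * e₃)))
    (hne₁ : α₁ * e₁ + α₂ * e₂ + α₃ * e₃ ≠ 0)
    (hne₂ : α₁ * e₂ + α₂ * e₁ + α₃ * e₃ ≠ 0) :
    {p : K × K | P₁ p.1 p.2 = 0 ∧ P₂ p.1 p.2 = 0} = {(u, v), (v, u)} := by
  have hresolvent (x₁ x₂ x₃ f₁ f₂ : K) :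
      x₁ * f₁ + x₂ * f₂ + x₃ * e₃ = lagrangeResolvent f₁ f₂ x₁ x₂ x₃ := by
    rw [he₃, lagrangeResolvent]; ring
  have hnum (f₁ f₂ : K) : α₁ * α₂ * e₃ + α₁ * α₃ * f₂ + α₂ * α₃ * f₁ =
      lagrangeResolvent f₁ f₂ (α₂ * α₃) (α₁ * α₃) (α₁ * α₂) := by
    rw [← hresolvent]; ring
  rw [hnum, hresolvent, ← hessianRoot] at hu hv
  rw [hresolvent] at hne₁ hne₂
  have hdet : a ^ 2 - 3 * b = (α₁ + α₂ + α₃) ^ 2 - 3 * (α₁ * α₂ + α₁ * α₃ + α₂ * α₃) := by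
    rw [ha, hb, neg_sq]
  have hdet_ne : a ^ 2 - 3 * b ≠ 0 := by
    rw [hdet, ← lagrangeResolvent_mul_swap hadd hmul]
    exact mul_ne_zero hne₁ hne₂
  have hsum : u + v = (9 * c - a * b) / (a ^ 2 - 3 * b) := by
    rw [hu, hv, hessianRoot_add_swap hadd hmul hne₁ hne₂, hdet, ha, hb, hc]; ring
  have hprod : u * v = (b ^ 2 - 3 * a * c) / (a ^ 2 - 3 * b) := by
    rw [hu, hv, hessianRoot_mul_swap hadd hmul, hdet, ha, hb, hc]; ring
  ext ⟨x, y⟩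
  simp only [Set.mem_ofPred_eq, hP₁, hP₂, polar_system_iff h3 hdet_ne, ← hsum, ← hprod,
    add_eq_add_and_mul_eq_mul_iff, Set.mem_insert_iff, Set.mem_singleton_iff, Prod.mk.injEq]

theorem stmt_9 (α₁ α₂ α₃ e₁ e₂ e₃ a b c u v : ℂ) (P₁ P₂ : ℂ → ℂ → ℂ)
    (he₁ : e₁ = Complex.exp (-(Real.pi : ℂ) / 3 * Complex.I))
    (he₂ : e₂ = Complex.exp ((Real.pi : ℂ) / 3 * Complex.I))
    (he₃ : e₃ = -1)
    (h12 : α₁ ≠ α₂) (h13 : α₁ ≠ α₃) (h23 : α₂ ≠ α₃)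
    (ha : a = -(α₁ + α₂ + α₃))
    (hb : b = α₁ * α₂ + α₁ * α₃ + α₂ * α₃)
    (hc : c = -(α₁ * α₂ * α₃))
    (hP₁ : ∀ z₁ z₂, P₁ z₁ z₂ = z₁ * z₂ + a / 3 * (z₁ + z₂) + b / 3)
    (hP₂ : ∀ z₁ z₂, P₂ z₁ z₂ = a / 3 * (z₁ * z₂) + b / 3 * (z₁ + z₂) + c)
    (hu : u = -((α₁ * α₂ * e₃ + α₁ * α₃ * e₂ + α₂ * α₃ * e₁) /
      (α₁ * e₁ + α₂ * e₂ + α₃ * e₃)))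
    (hv : v = -((α₁ * α₂ * e₃ + α₁ * α₃ * e₁ + α₂ * α₃ * e₂) /
      (α₁ * e₂ + α₂ * e₁ + α₃ * e₃)))
    (hne₁ : α₁ * e₁ + α₂ * e₂ + α₃ * e₃ ≠ 0)
    (hne₂ : α₁ * e₂ + α₂ * e₁ + α₃ * e₃ ≠ 0) :
    {p : ℂ × ℂ | P₁ p.1 p.2 = 0 ∧ P₂ p.1 p.2 = 0} = {(u, v), (v, u)} :=
  stmt_9_general three_ne_zero (by rw [he₁, he₂, exp_neg_pi_div_three_add_exp_pi_div_three])
    (by rw [he₁, he₂, exp_neg_pi_div_three_mul_exp_pi_div_three]) he₃ ha hb hc hP₁ hP₂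
    hu hv hne₁ hne₂
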